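/- arXiv:0902.4070 — 3 statements merged into one kernel-verified Lean document; each statement's English description precedes it below -/
import Mathlib

section
/- Let 0 < α < 1 and 0 < p ≤ 1/(α+2). Then for every nonnegative real sequence (a_n)_{n≥1}, ∑_{n=1}^∞ ( (∑_{i=1}^n i^{α−1})^{−1} · ∑_{k=n}^∞ k^{α−1}·a_k )^p ≥ (αp/(1−αp))^p · ∑_{n=1}^∞ a_n^p. -/
open scoped ENNReal

/-!
Write `Λ_n = ∑_{i ≤ n} i^(α-1)`, `A_n = ∑_{k ≥ n} k^(α-1) a_k` and `r = 1/p - α ≥ 2`, so that the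
constant is `(α/r)^p`. Since `A_n = n^(α-1) a_n + A_{n+1}`, Hölder's inequality with weights `1` and
`t_n` bounds a combination of `a_n^p` and `A_{n+1}^p` by a multiple of `A_n^p`, and summing over `n`
telescopes as soon as the coefficients satisfy one inequality for each `n`. The choice
`t_n = (n - 1/5)/r` works. By `α Λ_n ≤ n^α` the coefficient inequality at `n = x ≥ 2` reduces to
`x^u (x + r - 1/5)^(1-p) ≤ r x^(-αp) + (x-1)^u (x - 6/5)^(1-p)` with `u = (1-α)p`,
which is the sum of two bounds, with `(1-p)(r+1) + u = r`:
* `(x + r - 1/5)^(1-p) - (x - 6/5)^(1-p) ≤ (1-p)(r+1) x^(-p)`: the mean of `(y/x)^(-p)` over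
  `x - 6/5 ≤ y ≤ x + r - 1/5` is at most `1`; as `p ≤ 1/2`, it is enough to know this for the
  exponent `-1/2`, where it says `2√x ≤ √(x - 6/5) + √(x + r - 1/5)`;
* `(x^u - (x-1)^u) (x-1)^(1-p) ≤ u x^(-αp)`, a consequence of `log z ≤ √z - 1/√z`.

At `n = 1` the coefficient inequality follows from `(1 + 4/(5r))^r ≤ r`. The shift `1/5` is a
convenient value in a narrow window: for `r = 2` this last bound needs a shift of at least
`3 - 2√2 ≈ 0.172`, and the inequality between square roots at `x = 2` a shift below `0.22`.
-/

section Telescoping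

lemma ennreal_tsum_le_tsum_of_telescoping {f g T : ℕ → ℝ≥0∞} (h_zero : f 0 + T 0 ≤ g 0)
    (h_succ : ∀ n, f (n + 1) + T (n + 1) ≤ g (n + 1) + T n) : ∑' n, f n ≤ ∑' n, g n := by
  have partial_sum (N : ℕ) :
      ∑ n ∈ Finset.range (N + 1), f n + T N ≤ ∑ n ∈ Finset.range (N + 1), g n := by
    induction N with
    | zero => simpa using h_zero
    | succ N ih =>
      rw [Finset.sum_range_succ, Finset.sum_range_succ g, add_assoc]
      calc ∑ n ∈ Finset.range (N + 1), f n + (f (N + 1) + T (N + 1))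
          ≤ ∑ n ∈ Finset.range (N + 1), f n + (g (N + 1) + T N) := add_le_add le_rfl (h_succ N)
        _ = (∑ n ∈ Finset.range (N + 1), f n + T N) + g (N + 1) := by ring
        _ ≤ ∑ n ∈ Finset.range (N + 1), g n + g (N + 1) := by gcongr
  refine ENNReal.tsum_le_of_sum_range_le fun N ↦ ?_
  calc ∑ n ∈ Finset.range N, f n
      ≤ ∑ n ∈ Finset.range (N + 1), f n :=
        Finset.sum_le_sum_of_subset (Finset.range_subset_range.2 N.le_succ)
    _ ≤ ∑ n ∈ Finset.range (N + 1), f n + T N := le_self_add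
    _ ≤ ∑ n ∈ Finset.range (N + 1), g n := partial_sum N
    _ ≤ ∑' n, g n := ENNReal.sum_le_tsum _

/-- The tail `∑_{k ≥ n} w_k a_k` of a weighted series, indexed by the offset `k - n`. -/
noncomputable def weightedTail (w : ℕ → ℝ) (a : ℕ → ℝ≥0∞) (n : ℕ) : ℝ≥0∞ :=
  ∑' k, ENNReal.ofReal (w (n + k)) * a (n + k)

lemma weightedTail_eq_add (w : ℕ → ℝ) (a : ℕ → ℝ≥0∞) (n : ℕ) :
    weightedTail w a n = ENNReal.ofReal (w n) * a n + weightedTail w a (n + 1) := by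
  rw [weightedTail, tsum_eq_zero_add' ENNReal.summable, add_zero]
  simp only [weightedTail, add_assoc, add_comm 1]

variable {p : ℝ}

lemma ennreal_rpow_mul_rpow_add_le (hp0 : 0 < p) (hp1 : p < 1) (x y z w : ℝ≥0∞) :
    x ^ p * y ^ (1 - p) + z ^ p * w ^ (1 - p) ≤ (x + z) ^ p * (y + w) ^ (1 - p) := by
  have hq0 : 0 < 1 - p := sub_pos.2 hp1
  have holder := ENNReal.inner_le_Lp_mul_Lq Finset.univ ![x ^ p, z ^ p] ![y ^ (1 - p), w ^ (1 - p)]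
    (Real.HolderConjugate.inv_one_sub_inv hp0 hp1)
  simpa [← ENNReal.rpow_mul, hp0.ne', hq0.ne'] using holder

variable {C : ℝ}

lemma ennreal_mul_rpow_add_mul_rpow_le {b s t w : ℝ} (hp0 : 0 < p) (hp1 : p < 1) (hC : 0 ≤ C)
    (hb : 0 ≤ b) (hs : 0 ≤ s) (ht : 0 ≤ t) (hw : 0 < w)
    (h : C * w ^ (-p) * (1 + t) ^ (1 - p) ≤ b ^ p + s) (x y : ℝ≥0∞) :
    ENNReal.ofReal C * x ^ p + ENNReal.ofReal (C * w ^ (-p) * t ^ (1 - p)) * y ^ p ≤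
      (ENNReal.ofReal b * (ENNReal.ofReal w * x + y)) ^ p +
        ENNReal.ofReal s * (ENNReal.ofReal w * x + y) ^ p := by
  have hq0 : 0 ≤ 1 - p := sub_nonneg.2 hp1.le
  have hCw : 0 ≤ C * w ^ (-p) := by positivity
  set A := ENNReal.ofReal w * x + y
  have cancel : ENNReal.ofReal C = ENNReal.ofReal (C * w ^ (-p)) * ENNReal.ofReal w ^ p := by
    rw [ENNReal.ofReal_rpow_of_pos hw, ← ENNReal.ofReal_mul hCw, mul_assoc, ← Real.rpow_add hw,
      neg_add_cancel, Real.rpow_zero, mul_one]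
  calc ENNReal.ofReal C * x ^ p + ENNReal.ofReal (C * w ^ (-p) * t ^ (1 - p)) * y ^ p
      = ENNReal.ofReal (C * w ^ (-p)) *
          ((ENNReal.ofReal w * x) ^ p * 1 ^ (1 - p) + y ^ p * ENNReal.ofReal t ^ (1 - p)) := by
        rw [cancel, ENNReal.ofReal_mul hCw, ← ENNReal.ofReal_rpow_of_nonneg ht hq0,
          ENNReal.mul_rpow_of_nonneg _ _ hp0.le, ENNReal.one_rpow]
        ring
    _ ≤ ENNReal.ofReal (C * w ^ (-p)) * (A ^ p * (1 + ENNReal.ofReal t) ^ (1 - p)) := by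
        gcongr
        exact ennreal_rpow_mul_rpow_add_le hp0 hp1 _ _ _ _
    _ = ENNReal.ofReal (C * w ^ (-p) * (1 + t) ^ (1 - p)) * A ^ p := by
        rw [ENNReal.ofReal_mul hCw, ← ENNReal.ofReal_rpow_of_nonneg (by positivity) hq0,
          ENNReal.ofReal_add zero_le_one ht, ENNReal.ofReal_one]
        ring
    _ ≤ ENNReal.ofReal (b ^ p + s) * A ^ p := by gcongr
    _ = (ENNReal.ofReal b * A) ^ p + ENNReal.ofReal s * A ^ p := by
        rw [ENNReal.ofReal_add (by positivity) hs, ← ENNReal.ofReal_rpow_of_nonneg hb hp0.le,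
          ENNReal.mul_rpow_of_nonneg _ _ hp0.le, add_mul]

lemma ennreal_tsum_rpow_le_tsum_weightedTail_rpow {b t w : ℕ → ℝ} (hp0 : 0 < p) (hp1 : p < 1)
    (hC : 0 ≤ C) (hb : ∀ n, 0 ≤ b n) (ht : ∀ n, 0 ≤ t n) (hw : ∀ n, 0 < w n)
    (h_zero : C * w 0 ^ (-p) * (1 + t 0) ^ (1 - p) ≤ b 0 ^ p)
    (h_succ : ∀ n, C * w (n + 1) ^ (-p) * (1 + t (n + 1)) ^ (1 - p) ≤
      b (n + 1) ^ p + C * w n ^ (-p) * t n ^ (1 - p))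
    (a : ℕ → ℝ≥0∞) :
    ENNReal.ofReal C * ∑' n, a n ^ p ≤
      ∑' n, (ENNReal.ofReal (b n) * weightedTail w a n) ^ p := by
  rw [← ENNReal.tsum_mul_left]
  refine ennreal_tsum_le_tsum_of_telescoping (T := fun n ↦
    ENNReal.ofReal (C * w n ^ (-p) * t n ^ (1 - p)) * weightedTail w a (n + 1) ^ p) ?_ fun n ↦ ?_
  · rw [weightedTail_eq_add w a 0]
    simpa using ennreal_mul_rpow_add_mul_rpow_le hp0 hp1 hC (hb 0) le_rfl (ht 0) (hw 0)
      (by simpa using h_zero) (a 0) (weightedTail w a 1)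
  · rw [weightedTail_eq_add w a (n + 1)]
    have hs : 0 ≤ C * w n ^ (-p) * t n ^ (1 - p) :=
      mul_nonneg (mul_nonneg hC (Real.rpow_nonneg (hw n).le _)) (Real.rpow_nonneg (ht n) _)
    exact ennreal_mul_rpow_add_mul_rpow_le hp0 hp1 hC (hb _) hs (ht _) (hw _) (h_succ n) _ _

end Telescoping

lemma rpow_mul_le_rpow_mul_weighted_mean {c e y θ : ℝ} (hc : 0 < c) (hy : 0 < y) (hθ0 : 0 ≤ θ)
    (hθ1 : θ ≤ 1) : y ^ (e * θ) ≤ c ^ (e * θ) * (θ * c ^ (-e) * y ^ e + (1 - θ)) := by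
  have amgm := Real.geom_mean_le_arith_mean2_weighted hθ0 (sub_nonneg.2 hθ1)
    (Real.rpow_nonneg (div_pos hy hc).le e) zero_le_one (add_sub_cancel θ 1)
  rw [← Real.rpow_mul (by positivity), Real.one_rpow, mul_one, mul_one,
    Real.div_rpow hy.le hc.le, Real.div_rpow hy.le hc.le, div_le_iff₀ (by positivity)] at amgm
  refine amgm.trans_eq ?_
  rw [Real.rpow_neg hc.le]
  ring

-- Read as integrals, `h` says that the mean of `(y / c) ^ (s - 1)` over `[a, b]` is at most `1`,
-- and the conclusion says the same for `q - 1`: this is the monotonicity of power means.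
lemma rpow_sub_rpow_le_of_le_exponent {a b c q s : ℝ} (ha : 0 < a) (hab : a ≤ b) (hc : 0 < c)
    (hs0 : 0 < s) (hs1 : s < 1) (hsq : s ≤ q) (hq1 : q ≤ 1)
    (h : b ^ s - a ^ s ≤ s * c ^ (s - 1) * (b - a)) :
    b ^ q - a ^ q ≤ q * c ^ (q - 1) * (b - a) := by
  have hq0 : 0 < q := hs0.trans_le hsq
  obtain ⟨θ, hθ⟩ : ∃ θ, θ = (1 - q) / (1 - s) := ⟨_, rfl⟩
  have hθ0 : 0 ≤ θ := hθ ▸ div_nonneg (by linarith) (by linarith)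
  have hθ1 : θ ≤ 1 := hθ ▸ (div_le_one (by linarith)).2 (by linarith)
  have hθs : (s - 1) * θ = q - 1 := by
    have : 1 - s ≠ 0 := by linarith
    rw [hθ]; field_simp; ring
  have integral_eq {e : ℝ} (he : 0 < e) : ∫ y in a..b, y ^ (e - 1) = (b ^ e - a ^ e) / e := by
    rw [integral_rpow (.inl (by linarith)), sub_add_cancel]
  have integrable (e : ℝ) : IntervalIntegrable (fun y : ℝ ↦ y ^ e) MeasureTheory.volume a b :=
    intervalIntegral.intervalIntegrable_rpow (.inr (by rw [Set.uIcc_of_le hab]; simp [ha]))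
  have integrated := intervalIntegral.integral_mono_on hab (integrable _)
    ((((integrable (s - 1)).const_mul (θ * c ^ (-(s - 1)))).add
      intervalIntegrable_const).const_mul (c ^ (q - 1)))
    fun y hy ↦ hθs ▸ rpow_mul_le_rpow_mul_weighted_mean hc (ha.trans_le hy.1) hθ0 hθ1
  rw [intervalIntegral.integral_const_mul, intervalIntegral.integral_add
    ((integrable _).const_mul _) intervalIntegrable_const, intervalIntegral.integral_const_mul,
    intervalIntegral.integral_const, integral_eq hq0, integral_eq hs0, smul_eq_mul,
    div_le_iff₀ hq0] at integrated
  have mean_le : c ^ (-(s - 1)) * ((b ^ s - a ^ s) / s) ≤ b - a := by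
    rw [Real.rpow_neg hc.le, inv_mul_le_iff₀ (by positivity), div_le_iff₀ hs0]
    linarith
  calc b ^ q - a ^ q
      ≤ q * c ^ (q - 1) * (θ * (c ^ (-(s - 1)) * ((b ^ s - a ^ s) / s)) + (b - a) * (1 - θ)) := by
        linarith
    _ ≤ q * c ^ (q - 1) * (θ * (b - a) + (b - a) * (1 - θ)) := by gcongr
    _ = q * c ^ (q - 1) * (b - a) := by ring

lemma rpow_sub_rpow_le_of_two_mul_sqrt_le {a b c q : ℝ} (ha : 0 < a) (hab : a ≤ b) (hc : 0 < c)
    (hq0 : 1 / 2 ≤ q) (hq1 : q ≤ 1) (h : 2 * √c ≤ √a + √b) :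
    b ^ q - a ^ q ≤ q * c ^ (q - 1) * (b - a) := by
  refine rpow_sub_rpow_le_of_le_exponent ha hab hc (s := 1 / 2) (by norm_num)
    (by norm_num) hq0 hq1 ?_
  rw [show (1 / 2 - 1 : ℝ) = -(1 / 2) by norm_num, Real.rpow_neg hc.le]
  simp only [← Real.sqrt_eq_rpow]
  have hsub : 0 ≤ √b - √a := sub_nonneg.2 (Real.sqrt_le_sqrt hab)
  calc √b - √a = (√b - √a) * (2 * √c) * (1 / 2 * (√c)⁻¹) := by
        have : √c ≠ 0 := (Real.sqrt_pos.2 hc).ne'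
        field_simp
    _ ≤ (√b - √a) * (√a + √b) * (1 / 2 * (√c)⁻¹) := by gcongr
    _ = (√b ^ 2 - √a ^ 2) * (1 / 2 * (√c)⁻¹) := by ring
    _ = 1 / 2 * (√c)⁻¹ * (b - a) := by
        rw [Real.sq_sqrt ha.le, Real.sq_sqrt (ha.le.trans hab), mul_comm]

lemma two_mul_sqrt_le_sqrt_add_sqrt {x : ℝ} (hx : 2 ≤ x) :
    2 * √x ≤ √(x - 6 / 5) + √(x + 9 / 5) := by
  have prod_ge : x - 3 / 10 ≤ √(x - 6 / 5) * √(x + 9 / 5) := by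
    rw [← Real.sqrt_mul (by linarith)]
    exact Real.le_sqrt_of_sq_le (by linarith)
  refine abs_le_of_sq_le_sq' ?_ (by positivity) |>.2
  rw [mul_pow, add_sq, Real.sq_sqrt (by linarith), Real.sq_sqrt (by linarith),
    Real.sq_sqrt (by linarith)]
  linarith

lemma log_le_sqrt_sub_inv_sqrt {x : ℝ} (hx : 1 ≤ x) : Real.log x ≤ √x - (√x)⁻¹ := by
  have hx0 : 0 < x := one_pos.trans_le hx
  have h := Real.self_le_sinh_iff.2 (Real.log_nonneg (Real.one_le_sqrt.2 hx))
  rw [Real.sinh_log (Real.sqrt_pos.2 hx0), Real.log_sqrt hx0.le] at h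
  linarith

lemma rpow_sub_rpow_mul_rpow_le {a b q u : ℝ} (ha : 0 < a) (hab : a ≤ b) (hq : 1 / 2 ≤ q)
    (hu : 0 ≤ u) : (b ^ u - a ^ u) * a ^ q ≤ u * b ^ (u + q - 1) * (b - a) := by
  have hb : 0 < b := ha.trans_le hab
  have hy0 : 0 < a / b := div_pos ha hb
  have hy1 : a / b ≤ 1 := (div_le_one hb).2 hab
  have one_sub_le : 1 - (a / b) ^ u ≤ u * Real.log (b / a) := by
    have := Real.one_sub_inv_le_log_of_pos (Real.rpow_pos_of_pos (div_pos hb ha) u)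
    rwa [← Real.inv_rpow (div_pos hb ha).le, inv_div, Real.log_rpow (div_pos hb ha)] at this
  have log_le : Real.log (b / a) * (a / b) ^ q ≤ 1 - a / b := by
    have hsq : 0 < √(a / b) := Real.sqrt_pos.2 hy0
    calc Real.log (b / a) * (a / b) ^ q
        ≤ ((√(a / b))⁻¹ - √(a / b)) * √(a / b) := by
          gcongr
          · exact sub_nonneg.2 <| (Real.sqrt_le_one.2 hy1).trans
              ((one_le_inv₀ hsq).2 (Real.sqrt_le_one.2 hy1))
          · simpa [← Real.sqrt_inv] using log_le_sqrt_sub_inv_sqrt ((one_le_div ha).2 hab)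
          · rw [Real.sqrt_eq_rpow]
            exact Real.rpow_le_rpow_of_exponent_ge hy0 hy1 hq
      _ = 1 - a / b := by rw [sub_mul, inv_mul_cancel₀ hsq.ne', Real.mul_self_sqrt hy0.le]
  calc (b ^ u - a ^ u) * a ^ q
      = b ^ (u + q) * ((1 - (a / b) ^ u) * (a / b) ^ q) := by
        rw [Real.div_rpow ha.le hb.le, Real.div_rpow ha.le hb.le, Real.rpow_add hb]
        field_simp
    _ ≤ b ^ (u + q) * (u * Real.log (b / a) * (a / b) ^ q) := by gcongr
    _ ≤ b ^ (u + q) * (u * (1 - a / b)) := by rw [mul_assoc u]; gcongr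
    _ = u * b ^ (u + q - 1) * (b - a) := by rw [Real.rpow_sub_one hb.ne']; field_simp

lemma rpow_mul_rpow_add_le {α p r x : ℝ} (hα0 : 0 ≤ α) (hα1 : α ≤ 1) (hr : 2 ≤ r)
    (hp : p * (r + α) = 1) (hx : 2 ≤ x) :
    x ^ ((1 - α) * p) * (x + (r - 1 / 5)) ^ (1 - p) ≤
      r * x ^ (-(α * p)) + (x - 1) ^ ((1 - α) * p) * (x - 6 / 5) ^ (1 - p) := by
  have hx0 : 0 < x := by linarith
  have hp0 : 0 < p := pos_of_mul_pos_left (hp ▸ one_pos) (by linarith)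
  have hp_half : p ≤ 1 / 2 := by nlinarith
  have hu : 0 ≤ (1 - α) * p := mul_nonneg (by linarith) hp0.le
  have sqrt_le : 2 * √x ≤ √(x - 6 / 5) + √(x + (r - 1 / 5)) :=
    (two_mul_sqrt_le_sqrt_add_sqrt hx).trans (by gcongr; linarith)
  have increment_le := rpow_sub_rpow_le_of_two_mul_sqrt_le (q := 1 - p)
    (by linarith) (by linarith) hx0 (by linarith) (by linarith) sqrt_le
  have weight_le : (x ^ ((1 - α) * p) - (x - 1) ^ ((1 - α) * p)) * (x - 6 / 5) ^ (1 - p) ≤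
      (1 - α) * p * x ^ (-(α * p)) := by
    calc _ ≤ (x ^ ((1 - α) * p) - (x - 1) ^ ((1 - α) * p)) * (x - 1) ^ (1 - p) := by
          gcongr
          · exact sub_nonneg.2 (Real.rpow_le_rpow (by linarith) (by linarith) hu)
          · linarith
          · linarith
          · linarith
      _ ≤ (1 - α) * p * x ^ ((1 - α) * p + (1 - p) - 1) * (x - (x - 1)) :=
          rpow_sub_rpow_mul_rpow_le (by linarith) (by linarith) (by linarith) hu
      _ = (1 - α) * p * x ^ (-(α * p)) := by ring_nf
  have exponent : x ^ ((1 - α) * p) * x ^ (1 - p - 1) = x ^ (-(α * p)) := by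
    rw [← Real.rpow_add hx0]; ring_nf
  have coefficient : (1 - p) * (r + 1) + (1 - α) * p = r := by linarith
  have scaled := mul_le_mul_of_nonneg_left increment_le (Real.rpow_nonneg hx0.le ((1 - α) * p))
  calc x ^ ((1 - α) * p) * (x + (r - 1 / 5)) ^ (1 - p)
      ≤ (1 - p) * (r + 1) * (x ^ ((1 - α) * p) * x ^ (1 - p - 1)) +
          x ^ ((1 - α) * p) * (x - 6 / 5) ^ (1 - p) := by linarith
    _ ≤ ((1 - p) * (r + 1) + (1 - α) * p) * x ^ (-(α * p)) +
          (x - 1) ^ ((1 - α) * p) * (x - 6 / 5) ^ (1 - p) := by rw [exponent]; linarith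
    _ = r * x ^ (-(α * p)) + (x - 1) ^ ((1 - α) * p) * (x - 6 / 5) ^ (1 - p) := by
        rw [coefficient]

lemma one_add_div_rpow_self_le {r : ℝ} (hr : 2 ≤ r) : (1 + 4 / 5 / r) ^ r ≤ r := by
  have hr0 : 0 < r := by linarith
  have hy0 : 0 < r / (r + 4 / 5) := by positivity
  have bernoulli : (3 / 5 * r + 4 / 5) / (r + 4 / 5) ≤ (r / (r + 4 / 5)) ^ (r / 2) := by
    have h := one_add_mul_self_le_rpow_one_add (s := r / (r + 4 / 5) - 1) (p := r / 2)
      (by linarith) (by linarith)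
    rw [add_sub_cancel] at h
    refine (Eq.le ?_).trans h
    field_simp
    ring
  have polynomial : (r + 4 / 5) ^ 2 ≤ r * (3 / 5 * r + 4 / 5) ^ 2 := by
    nlinarith [mul_nonneg (sub_nonneg.2 hr) (sq_nonneg r), mul_nonneg (sub_nonneg.2 hr) hr0.le]
  have inv_le : r⁻¹ ≤ (r / (r + 4 / 5)) ^ r := by
    calc r⁻¹ ≤ ((3 / 5 * r + 4 / 5) / (r + 4 / 5)) ^ 2 := by
          rw [div_pow, inv_eq_one_div, div_le_div_iff₀ hr0 (by positivity)]
          linarith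
      _ ≤ ((r / (r + 4 / 5)) ^ (r / 2)) ^ 2 := by gcongr
      _ = (r / (r + 4 / 5)) ^ r := by
          rw [← Real.rpow_mul_natCast hy0.le, Nat.cast_ofNat, div_mul_cancel₀ _ two_ne_zero]
  rw [show 1 + 4 / 5 / r = (r / (r + 4 / 5))⁻¹ by field_simp, Real.inv_rpow hy0.le]
  exact inv_le_of_inv_le₀ hr0 inv_le

lemma mul_sum_Icc_rpow_sub_one_le {α : ℝ} (hα0 : 0 < α) (hα1 : α ≤ 1) (n : ℕ) :
    α * ∑ i ∈ Finset.Icc 1 n, (i : ℝ) ^ (α - 1) ≤ (n : ℝ) ^ α := by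
  induction n with
  | zero => simp [hα0.ne']
  | succ n ih =>
    have hN : (0 : ℝ) < n + 1 := by positivity
    have bernoulli : (n / (n + 1) : ℝ) ^ α ≤ 1 - α / (n + 1) := by
      have h := rpow_one_add_le_one_add_mul_self (s := n / (n + 1) - 1) (p := α)
        (by linarith [show (0 : ℝ) ≤ n / (n + 1) by positivity]) hα0.le hα1
      rw [add_sub_cancel] at h
      refine h.trans_eq ?_
      field_simp
      ring
    rw [Real.div_rpow n.cast_nonneg hN.le, div_le_iff₀ (by positivity)] at bernoulli
    rw [Finset.sum_Icc_succ_top (by lia), mul_add, Nat.cast_succ, Real.rpow_sub_one hN.ne']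
    calc _ ≤ (n : ℝ) ^ α + α * (((n : ℝ) + 1) ^ α / (n + 1)) := by gcongr
      _ ≤ (1 - α / (n + 1)) * ((n : ℝ) + 1) ^ α + α * (((n : ℝ) + 1) ^ α / (n + 1)) := by gcongr
      _ = ((n : ℝ) + 1) ^ α := by ring

lemma div_rpow_mul_one_add_rpow_le_one {α p r : ℝ} (hα0 : 0 < α) (hα1 : α ≤ 1) (hr : 2 ≤ r)
    (hp : p * (r + α) = 1) : (α / r) ^ p * (1 + 4 / 5 / r) ^ (1 - p) ≤ 1 := by
  have hr0 : 0 < r := by linarith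
  have hp0 : 0 < p := pos_of_mul_pos_left (hp ▸ one_pos) (by linarith)
  have hbase : 1 ≤ 1 + 4 / 5 / r := le_add_of_nonneg_right (by positivity)
  have rpow_le : (1 + 4 / 5 / r) ^ (1 - p) ≤ (r / α) ^ p := by
    calc (1 + 4 / 5 / r) ^ (1 - p)
        ≤ (1 + 4 / 5 / r) ^ (r * p) := Real.rpow_le_rpow_of_exponent_le hbase (by nlinarith)
      _ = ((1 + 4 / 5 / r) ^ r) ^ p := Real.rpow_mul (by positivity) r p
      _ ≤ r ^ p := by gcongr; exact one_add_div_rpow_self_le hr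
      _ ≤ (r / α) ^ p := by gcongr; exact le_div_self hr0.le hα0 hα1
  calc (α / r) ^ p * (1 + 4 / 5 / r) ^ (1 - p)
      ≤ (α / r) ^ p * (r / α) ^ p := by gcongr
    _ = 1 := by
        rw [← Real.mul_rpow (by positivity) (by positivity), div_mul_div_cancel₀ hr0.ne',
          div_self hα0.ne', Real.one_rpow]

lemma div_rpow_mul_one_add_div_rpow_le {α p r x : ℝ} (hα0 : 0 < α) (hα1 : α ≤ 1) (hr : 2 ≤ r)
    (hp : p * (r + α) = 1) (hx : 2 ≤ x) :
    (α / r) ^ p * (x ^ (α - 1)) ^ (-p) * (1 + (x - 1 / 5) / r) ^ (1 - p) ≤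
      (α / x ^ α) ^ p +
        (α / r) ^ p * ((x - 1) ^ (α - 1)) ^ (-p) * ((x - 6 / 5) / r) ^ (1 - p) := by
  have hr0 : 0 < r := by linarith
  have hx0 : 0 < x := by linarith
  have hr_mul : r ^ p * r ^ (1 - p) = r := by
    rw [← Real.rpow_add hr0, add_sub_cancel, Real.rpow_one]
  have factor_out {y z : ℝ} (hy : 0 < y) (hz : 0 ≤ z) :
      (α / r) ^ p * (y ^ (α - 1)) ^ (-p) * (z / r) ^ (1 - p) =
        α ^ p / r * (y ^ ((1 - α) * p) * z ^ (1 - p)) := by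
    rw [← Real.rpow_mul hy.le, Real.div_rpow hα0.le hr0.le, Real.div_rpow hz hr0.le,
      mul_right_comm, div_mul_div_comm, hr_mul]
    ring_nf
  have main_term : (α / x ^ α) ^ p = α ^ p / r * (r * x ^ (-(α * p))) := by
    rw [Real.div_rpow hα0.le (by positivity), ← Real.rpow_mul hx0.le, Real.rpow_neg hx0.le]
    field_simp
  rw [show 1 + (x - 1 / 5) / r = (x + (r - 1 / 5)) / r by field_simp; ring,
    factor_out hx0 (by linarith), factor_out (by linarith) (by linarith), main_term, ← mul_add]
  gcongr
  exact rpow_mul_rpow_add_le hα0.le hα1 hr hp hx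

lemma div_rpow_le_inv_sum_Icc_rpow {α p : ℝ} (hα0 : 0 < α) (hα1 : α ≤ 1) (hp : 0 ≤ p) (n : ℕ) :
    (α / ((n + 1 : ℕ) : ℝ) ^ α) ^ p ≤
      (∑ i ∈ Finset.Icc 1 (n + 1), (i : ℝ) ^ (α - 1))⁻¹ ^ p := by
  have sum_pos : 0 < ∑ i ∈ Finset.Icc 1 (n + 1), (i : ℝ) ^ (α - 1) :=
    Finset.sum_pos (fun i hi ↦ Real.rpow_pos_of_pos (mod_cast (Finset.mem_Icc.1 hi).1) _)
      ⟨1, by simp⟩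
  gcongr
  rw [le_inv_comm₀ (by positivity) sum_pos, inv_div, le_div_iff₀ hα0, mul_comm]
  exact mul_sum_Icc_rpow_sub_one_le hα0 hα1 (n + 1)

-- Indices start at `0`: the Hölder weight `t_n = (n - 1/5)/r` appears as `(n + 4 / 5) / r`.
lemma div_rpow_mul_one_add_div_rpow_le_inv_sum_Icc {α p r : ℝ} (hα0 : 0 < α) (hα1 : α ≤ 1)
    (hr : 2 ≤ r) (hp : p * (r + α) = 1) (n : ℕ) :
    (α / r) ^ p * (((n + 1 + 1 : ℕ) : ℝ) ^ (α - 1)) ^ (-p) *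
        (1 + ((n + 1 : ℕ) + 4 / 5) / r) ^ (1 - p) ≤
      (∑ i ∈ Finset.Icc 1 (n + 1 + 1), (i : ℝ) ^ (α - 1))⁻¹ ^ p +
        (α / r) ^ p * (((n + 1 : ℕ) : ℝ) ^ (α - 1)) ^ (-p) * ((n + 4 / 5) / r) ^ (1 - p) := by
  have hp0 : 0 < p := pos_of_mul_pos_left (hp ▸ one_pos) (by linarith)
  have hx : (2 : ℝ) ≤ (n + 1 + 1 : ℕ) := mod_cast Nat.le_add_left 2 n
  have h := (div_rpow_mul_one_add_div_rpow_le hα0 hα1 hr hp hx).trans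
    (add_le_add_left (div_rpow_le_inv_sum_Icc_rpow hα0 hα1 hp0.le (n + 1)) _)
  rwa [show ((n + 1 + 1 : ℕ) : ℝ) - 1 / 5 = (n + 1 : ℕ) + 4 / 5 by push_cast; ring,
    show ((n + 1 + 1 : ℕ) : ℝ) - 1 = (n + 1 : ℕ) by push_cast; ring,
    show ((n + 1 + 1 : ℕ) : ℝ) - 6 / 5 = n + 4 / 5 by push_cast; ring] at h

theorem stmt_14_general (p α : ℝ) (hα0 : 0 < α) (hα1 : α ≤ 1) (hp0 : 0 < p)
    (hp1 : p ≤ 1 / (α + 2)) (a : ℕ → ℝ≥0∞) :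
    ENNReal.ofReal ((α * p / (1 - α * p)) ^ p) * ∑' n : ℕ, a (n + 1) ^ p ≤
      ∑' n : ℕ,
        (ENNReal.ofReal ((∑ i ∈ Finset.Icc 1 (n + 1), (i : ℝ) ^ (α - 1))⁻¹) *
          ∑' k : ℕ, ENNReal.ofReal (((n + 1 + k : ℕ) : ℝ) ^ (α - 1)) * a (n + 1 + k)) ^ p := by
  obtain ⟨r, hr⟩ : ∃ r, r = 1 / p - α := ⟨_, rfl⟩
  have hpr : p * (r + α) = 1 := by rw [hr]; field_simp; ring
  have hr2 : 2 ≤ r := by linarith [(le_one_div hp0 (by linarith)).1 hp1]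
  have hC : α * p / (1 - α * p) = α / r := by
    rw [show 1 - α * p = r * p by linarith, mul_div_mul_right _ _ hp0.ne']
  have criterion := ennreal_tsum_rpow_le_tsum_weightedTail_rpow (p := p) (C := (α / r) ^ p)
    (b := fun n ↦ (∑ i ∈ Finset.Icc 1 (n + 1), (i : ℝ) ^ (α - 1))⁻¹)
    (t := fun n ↦ (n + 4 / 5) / r) (w := fun n ↦ ((n + 1 : ℕ) : ℝ) ^ (α - 1)) hp0 (by nlinarith)
    (by positivity) (fun n ↦ by positivity) (fun n ↦ by positivity) (fun n ↦ by positivity)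
    (by simpa using div_rpow_mul_one_add_rpow_le_one hα0 hα1 hr2 hpr)
    (div_rpow_mul_one_add_div_rpow_le_inv_sum_Icc hα0 hα1 hr2 hpr) (fun n ↦ a (n + 1))
  simpa only [weightedTail, hC, Nat.add_right_comm] using criterion

/-- For `0 < α < 1` and `0 < p ≤ 1/(α+2)`:
`∑_{n≥1} ((∑_{i=1}^n i^{α-1})⁻¹ ∑_{k≥n} k^{α-1} a_k)^p ≥ (αp/(1-αp))^p ∑_{n≥1} a_n^p`. -/
theorem stmt_14 (p α : ℝ) (hα0 : 0 < α) (hα1 : α < 1) (hp0 : 0 < p) (hp1 : p ≤ 1 / (α + 2))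
    (a : ℕ → ℝ) (ha : ∀ n, 1 ≤ n → 0 ≤ a n) :
    ENNReal.ofReal ((α * p / (1 - α * p)) ^ p) * ∑' n : ℕ, ENNReal.ofReal (a (n + 1)) ^ p ≤
      ∑' n : ℕ,
        (ENNReal.ofReal ((∑ i ∈ Finset.Icc 1 (n + 1), (i : ℝ) ^ (α - 1))⁻¹) *
          ∑' k : ℕ, ENNReal.ofReal (((n + 1 + k : ℕ) : ℝ) ^ (α - 1) * a (n + 1 + k))) ^ p := by
  simp only [ENNReal.ofReal_mul (Real.rpow_nonneg (Nat.cast_nonneg _) _)]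
  exact stmt_14_general p α hα0 hα1.le hp0 hp1 fun n ↦ ENNReal.ofReal (a n)
end

section
/- Let 1 < p < ∞, let (λ_n)_{n≥1} and (Λ_n)_{n≥1} be sequences of positive reals, let a be a real constant such that Λ_n + a·λ_n > 0 for all n ≥ 1, and let 0 < L < p. Define b_n = ((p−L)/p)·(1 + a·λ_n/Λ_n)^{p−1}·(λ_n/Λ_n) + λ_n/λ_{n+1}. If for every integer n ≥ 1 one has ∑_{k=1}^n λ_k·∏_{i=k}^n b_i^{1/(p−1)} ≤ (p/(p−L))·(Λ_n + a·λ_n), then for every nonnegative real sequence (a_n)_{n≥1}, ∑_{n=1}^∞ ( ∑_{k=1}^n (λ_k/Λ_n)·a_k )^p ≤ (p/(p−L))^p · ∑_{n=1}^∞ a_n^p. -/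
open scoped ENNReal

/-!
Write `r n = ∏_{1 ≤ i < n} b i ^ (1 / (p - 1))` and `u n = 1 / (λ n * r n ^ (p - 1))`. Hölder's
inequality with weights `λ k / r k` bounds `(∑_{k ≤ n} λ k * A k) ^ p` by
`(∑_{k ≤ n} λ k / r k) ^ (p - 1) * ∑_{k ≤ n} λ k * A k ^ p * r k ^ (p - 1)`. The definition of `b`
is exactly what makes the assumed bound on `∑_{k ≤ n} λ k * ∏_{i = k}^n b i ^ (1 / (p - 1))` turn
the first factor into a multiple of `u n - u (n + 1)`, so that summation by parts collapses the sum
over `n` to a multiple of `∑ A n ^ p`.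
-/

section Holder

variable {ι : Type*} {s : Finset ι} {p : ℝ} {w f r : ι → ℝ}

lemma rpow_sum_mul_le_rpow_sum_mul_sum_mul_rpow (hp : 1 ≤ p) (hw : ∀ i ∈ s, 0 ≤ w i)
    (hf : ∀ i ∈ s, 0 ≤ f i) :
    (∑ i ∈ s, w i * f i) ^ p ≤ (∑ i ∈ s, w i) ^ (p - 1) * ∑ i ∈ s, w i * f i ^ p := by
  have hp0 : 0 < p := by linarith
  have sum_w_nonneg : 0 ≤ ∑ i ∈ s, w i := Finset.sum_nonneg hw
  have sum_wf_nonneg : 0 ≤ ∑ i ∈ s, w i * f i :=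
    Finset.sum_nonneg fun i hi ↦ mul_nonneg (hw i hi) (hf i hi)
  have sum_wfp_nonneg : 0 ≤ ∑ i ∈ s, w i * f i ^ p :=
    Finset.sum_nonneg fun i hi ↦ mul_nonneg (hw i hi) (Real.rpow_nonneg (hf i hi) p)
  have holder : ∑ i ∈ s, w i * f i ≤
      (∑ i ∈ s, w i) ^ (1 - p⁻¹) * (∑ i ∈ s, w i * f i ^ p) ^ p⁻¹ := by
    have := Real.inner_le_weight_mul_Lp_of_nonneg s.attach hp (fun i ↦ w i) (fun i ↦ f i)
      (fun i ↦ hw i i.2) (fun i ↦ hf i i.2)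
    simpa only [Finset.sum_attach s w, Finset.sum_attach s fun i ↦ w i * f i,
      Finset.sum_attach s fun i ↦ w i * f i ^ p] using this
  calc (∑ i ∈ s, w i * f i) ^ p
    _ ≤ ((∑ i ∈ s, w i) ^ (1 - p⁻¹) * (∑ i ∈ s, w i * f i ^ p) ^ p⁻¹) ^ p :=
      Real.rpow_le_rpow sum_wf_nonneg holder hp0.le
    _ = (∑ i ∈ s, w i) ^ (p - 1) * ∑ i ∈ s, w i * f i ^ p := by
      rw [Real.mul_rpow (by positivity) (by positivity), ← Real.rpow_mul sum_w_nonneg,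
        Real.rpow_inv_rpow sum_wfp_nonneg hp0.ne', sub_mul, one_mul, inv_mul_cancel₀ hp0.ne']

lemma rpow_sum_mul_le_rpow_sum_div_mul_sum (hp : 1 ≤ p) (hw : ∀ i ∈ s, 0 ≤ w i)
    (hf : ∀ i ∈ s, 0 ≤ f i) (hr : ∀ i ∈ s, 0 < r i) :
    (∑ i ∈ s, w i * f i) ^ p ≤
      (∑ i ∈ s, w i / r i) ^ (p - 1) * ∑ i ∈ s, w i * f i ^ p * r i ^ (p - 1) := by
  have sum_eq : ∑ i ∈ s, w i * f i = ∑ i ∈ s, w i / r i * (f i * r i) :=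
    Finset.sum_congr rfl fun i hi ↦ by have := hr i hi; field_simp
  have sum_rpow_eq : ∑ i ∈ s, w i * f i ^ p * r i ^ (p - 1) =
      ∑ i ∈ s, w i / r i * (f i * r i) ^ p :=
    Finset.sum_congr rfl fun i hi ↦ by
      rw [Real.mul_rpow (hf i hi) (hr i hi).le, Real.rpow_sub_one (hr i hi).ne']
      ring
  rw [sum_eq, sum_rpow_eq]
  exact rpow_sum_mul_le_rpow_sum_mul_sum_mul_rpow hp
    (fun i hi ↦ div_nonneg (hw i hi) (hr i hi).le) fun i hi ↦ mul_nonneg (hf i hi) (hr i hi).le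

end Holder

lemma sum_range_sub_mul_sum_Icc {R : Type*} [CommRing R] (u t : ℕ → R) (N : ℕ) :
    ∑ n ∈ Finset.range N, (u (n + 1) - u (n + 2)) * ∑ k ∈ Finset.Icc 1 (n + 1), t k =
      ∑ n ∈ Finset.range N, u (n + 1) * t (n + 1) - u (N + 1) * ∑ k ∈ Finset.Icc 1 N, t k := by
  induction N with
  | zero => simp
  | succ N ih =>
    rw [Finset.sum_range_succ, ih, Finset.sum_range_succ, Finset.sum_Icc_succ_top (by lia)]
    ring

lemma tsum_ofReal_le_of_sum_range_le {f g : ℕ → ℝ} {C : ℝ} (hf : ∀ n, 0 ≤ f n)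
    (hg : ∀ n, 0 ≤ g n) (hC : 0 ≤ C)
    (h : ∀ N, ∑ n ∈ Finset.range N, f n ≤ C * ∑ n ∈ Finset.range N, g n) :
    ∑' n, ENNReal.ofReal (f n) ≤ ENNReal.ofReal C * ∑' n, ENNReal.ofReal (g n) := by
  rw [ENNReal.tsum_eq_iSup_nat]
  refine iSup_le fun N ↦ ?_
  calc ∑ n ∈ Finset.range N, ENNReal.ofReal (f n)
    _ = ENNReal.ofReal (∑ n ∈ Finset.range N, f n) :=
      (ENNReal.ofReal_sum_of_nonneg fun n _ ↦ hf n).symm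
    _ ≤ ENNReal.ofReal (C * ∑ n ∈ Finset.range N, g n) := ENNReal.ofReal_le_ofReal (h N)
    _ = ENNReal.ofReal C * ∑ n ∈ Finset.range N, ENNReal.ofReal (g n) := by
      rw [ENNReal.ofReal_mul hC, ENNReal.ofReal_sum_of_nonneg fun n _ ↦ hg n]
    _ ≤ ENNReal.ofReal C * ∑' n, ENNReal.ofReal (g n) := by
      gcongr
      exact ENNReal.sum_le_tsum _

/-- The action of the factorable matrix with entries `lam k / Lam n` (`1 ≤ k ≤ n`) on a
sequence `A`; sequences are indexed from `1`. -/
noncomputable def factorableTransform (lam Lam A : ℕ → ℝ) (n : ℕ) : ℝ :=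
  ∑ k ∈ Finset.Icc 1 n, lam k / Lam n * A k

/-- The weights `u n = 1 / (lam n * r n ^ (p - 1))`, whose decrements `u n - u (n + 1)` drive the
summation by parts. -/
noncomputable def telescopingWeight (p : ℝ) (lam r : ℕ → ℝ) (n : ℕ) : ℝ :=
  (lam n * r n ^ (p - 1))⁻¹

/-- The product of the terms of `β` with indices in `[1, n)`. -/
def prefixProd (β : ℕ → ℝ) (n : ℕ) : ℝ :=
  ∏ i ∈ Finset.Ico 1 n, β i

section FactorableTransform

variable {p C : ℝ} {lam Lam r A : ℕ → ℝ} {n : ℕ}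

lemma factorableTransform_eq_div (lam Lam A : ℕ → ℝ) (n : ℕ) :
    factorableTransform lam Lam A n = (∑ k ∈ Finset.Icc 1 n, lam k * A k) / Lam n := by
  simp only [factorableTransform, Finset.sum_div, div_mul_eq_mul_div]

lemma factorableTransform_nonneg (hlam : ∀ k, 1 ≤ k → 0 ≤ lam k) (hLam : 0 ≤ Lam n)
    (hA : ∀ k, 1 ≤ k → 0 ≤ A k) : 0 ≤ factorableTransform lam Lam A n :=
  Finset.sum_nonneg fun k hk ↦
    have hk1 := (Finset.mem_Icc.1 hk).1
    mul_nonneg (div_nonneg (hlam k hk1) hLam) (hA k hk1)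

lemma factorableTransform_rpow_le (hp : 1 ≤ p) (hlam : ∀ k, 1 ≤ k → 0 ≤ lam k)
    (hLam : 0 < Lam n) (hr : ∀ k, 1 ≤ k → 0 < r k) (hA : ∀ k, 1 ≤ k → 0 ≤ A k) {d : ℝ}
    (hd : (∑ k ∈ Finset.Icc 1 n, lam k / r k) ^ (p - 1) ≤ Lam n ^ p * d) :
    factorableTransform lam Lam A n ^ p ≤
      d * ∑ k ∈ Finset.Icc 1 n, lam k * A k ^ p * r k ^ (p - 1) := by
  have one_le {k : ℕ} (hk : k ∈ Finset.Icc 1 n) : 1 ≤ k := (Finset.mem_Icc.1 hk).1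
  have sum_nonneg : 0 ≤ ∑ k ∈ Finset.Icc 1 n, lam k * A k :=
    Finset.sum_nonneg fun k hk ↦ mul_nonneg (hlam k (one_le hk)) (hA k (one_le hk))
  have weighted_sum_nonneg : 0 ≤ ∑ k ∈ Finset.Icc 1 n, lam k * A k ^ p * r k ^ (p - 1) :=
    Finset.sum_nonneg fun k hk ↦ mul_nonneg
      (mul_nonneg (hlam k (one_le hk)) (Real.rpow_nonneg (hA k (one_le hk)) _))
      (Real.rpow_nonneg (hr k (one_le hk)).le _)
  rw [factorableTransform_eq_div, Real.div_rpow sum_nonneg hLam.le, div_le_iff₀ (by positivity)]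
  calc (∑ k ∈ Finset.Icc 1 n, lam k * A k) ^ p
    _ ≤ (∑ k ∈ Finset.Icc 1 n, lam k / r k) ^ (p - 1) *
        ∑ k ∈ Finset.Icc 1 n, lam k * A k ^ p * r k ^ (p - 1) :=
      rpow_sum_mul_le_rpow_sum_div_mul_sum hp (fun k hk ↦ hlam k (one_le hk))
        (fun k hk ↦ hA k (one_le hk)) fun k hk ↦ hr k (one_le hk)
    _ ≤ Lam n ^ p * d * ∑ k ∈ Finset.Icc 1 n, lam k * A k ^ p * r k ^ (p - 1) := by gcongr
    _ = d * (∑ k ∈ Finset.Icc 1 n, lam k * A k ^ p * r k ^ (p - 1)) * Lam n ^ p := by ring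

lemma sum_factorableTransform_rpow_le (hp : 1 ≤ p) (hC : 0 ≤ C)
    (hlam : ∀ n, 1 ≤ n → 0 < lam n) (hLam : ∀ n, 1 ≤ n → 0 < Lam n)
    (hr : ∀ n, 1 ≤ n → 0 < r n) (hA : ∀ n, 1 ≤ n → 0 ≤ A n)
    (hbound : ∀ n, 1 ≤ n → (∑ k ∈ Finset.Icc 1 n, lam k / r k) ^ (p - 1) ≤
      Lam n ^ p * (C * (telescopingWeight p lam r n - telescopingWeight p lam r (n + 1))))
    (N : ℕ) :
    ∑ n ∈ Finset.range N, factorableTransform lam Lam A (n + 1) ^ p ≤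
      C * ∑ n ∈ Finset.range N, A (n + 1) ^ p := by
  set u := telescopingWeight p lam r with hu
  set t : ℕ → ℝ := fun k ↦ lam k * A k ^ p * r k ^ (p - 1) with ht
  have t_nonneg (k : ℕ) (hk : 1 ≤ k) : 0 ≤ t k :=
    mul_nonneg (mul_nonneg (hlam k hk).le (Real.rpow_nonneg (hA k hk) _))
      (Real.rpow_nonneg (hr k hk).le _)
  have u_nonneg : 0 ≤ u (N + 1) :=
    inv_nonneg.2 <| mul_nonneg (hlam _ (by lia)).le (Real.rpow_nonneg (hr _ (by lia)).le _)
  have u_mul_t (n : ℕ) : u (n + 1) * t (n + 1) = A (n + 1) ^ p := by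
    have := hlam (n + 1) (by lia)
    have := Real.rpow_pos_of_pos (hr (n + 1) (by lia)) (p - 1)
    simp only [hu, ht, telescopingWeight]
    field_simp
  calc ∑ n ∈ Finset.range N, factorableTransform lam Lam A (n + 1) ^ p
    _ ≤ ∑ n ∈ Finset.range N,
        C * (u (n + 1) - u (n + 2)) * ∑ k ∈ Finset.Icc 1 (n + 1), t k :=
      Finset.sum_le_sum fun n _ ↦ factorableTransform_rpow_le hp (fun k hk ↦ (hlam k hk).le)
        (hLam _ (by lia)) hr hA (hbound _ (by lia))
    _ = C * (∑ n ∈ Finset.range N, A (n + 1) ^ p - u (N + 1) * ∑ k ∈ Finset.Icc 1 N, t k) := by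
      simp only [mul_assoc, ← Finset.mul_sum, sum_range_sub_mul_sum_Icc, u_mul_t]
    _ ≤ C * ∑ n ∈ Finset.range N, A (n + 1) ^ p := by
      gcongr
      exact sub_le_self _ <| mul_nonneg u_nonneg <|
        Finset.sum_nonneg fun k hk ↦ t_nonneg k (Finset.mem_Icc.1 hk).1

lemma tsum_factorableTransform_rpow_le (hp : 1 ≤ p) (hC : 0 ≤ C)
    (hlam : ∀ n, 1 ≤ n → 0 < lam n) (hLam : ∀ n, 1 ≤ n → 0 < Lam n)
    (hr : ∀ n, 1 ≤ n → 0 < r n) (hA : ∀ n, 1 ≤ n → 0 ≤ A n)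
    (hbound : ∀ n, 1 ≤ n → (∑ k ∈ Finset.Icc 1 n, lam k / r k) ^ (p - 1) ≤
      Lam n ^ p * (C * (telescopingWeight p lam r n - telescopingWeight p lam r (n + 1)))) :
    ∑' n, ENNReal.ofReal (factorableTransform lam Lam A (n + 1)) ^ p ≤
      ENNReal.ofReal C * ∑' n, ENNReal.ofReal (A (n + 1)) ^ p := by
  have hp0 : 0 ≤ p := by linarith
  have hA' (n : ℕ) : 0 ≤ A (n + 1) := hA _ (by lia)
  have transform_nonneg (n : ℕ) : 0 ≤ factorableTransform lam Lam A (n + 1) :=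
    factorableTransform_nonneg (fun k hk ↦ (hlam k hk).le) (hLam _ (by lia)).le hA
  simp only [fun n ↦ ENNReal.ofReal_rpow_of_nonneg (transform_nonneg n) hp0,
    fun n ↦ ENNReal.ofReal_rpow_of_nonneg (hA' n) hp0]
  exact tsum_ofReal_le_of_sum_range_le (fun n ↦ Real.rpow_nonneg (transform_nonneg n) p)
    (fun n ↦ Real.rpow_nonneg (hA' n) p) hC
    (sum_factorableTransform_rpow_le hp hC hlam hLam hr hA hbound)

end FactorableTransform

section PrefixProd

variable {β : ℕ → ℝ} {n : ℕ}

lemma prefixProd_pos (hβ : ∀ i, 1 ≤ i → 0 < β i) (n : ℕ) : 0 < prefixProd β n :=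
  Finset.prod_pos fun i hi ↦ hβ i (Finset.mem_Ico.1 hi).1

lemma prefixProd_succ (β : ℕ → ℝ) (hn : 1 ≤ n) :
    prefixProd β (n + 1) = prefixProd β n * β n :=
  Finset.prod_Ico_succ_top hn β

lemma prod_Icc_eq_prefixProd_div (hβ : ∀ i, 1 ≤ i → 0 < β i) {k : ℕ}
    (hk : k ∈ Finset.Icc 1 n) :
    ∏ i ∈ Finset.Icc k n, β i = prefixProd β (n + 1) / prefixProd β k := by
  obtain ⟨hk1, hkn⟩ := Finset.mem_Icc.1 hk
  rw [eq_div_iff (prefixProd_pos hβ k).ne', mul_comm, ← Finset.Ico_succ_right_eq_Icc]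
  exact Finset.prod_Ico_consecutive β hk1 (Nat.le_succ_of_le hkn)

lemma sum_mul_prod_Icc_eq_prefixProd_mul_sum_div (hβ : ∀ i, 1 ≤ i → 0 < β i) (w : ℕ → ℝ) (n : ℕ) :
    ∑ k ∈ Finset.Icc 1 n, w k * ∏ i ∈ Finset.Icc k n, β i =
      prefixProd β (n + 1) * ∑ k ∈ Finset.Icc 1 n, w k / prefixProd β k := by
  rw [Finset.mul_sum]
  refine Finset.sum_congr rfl fun k hk ↦ ?_
  rw [prod_Icc_eq_prefixProd_div hβ hk]
  ring

lemma telescopingWeight_prefixProd_sub {p : ℝ} {lam : ℕ → ℝ} (hβ : ∀ i, 1 ≤ i → 0 < β i)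
    (hn : 1 ≤ n) (hlam : lam n ≠ 0) (hlam_succ : lam (n + 1) ≠ 0) :
    telescopingWeight p lam (prefixProd β) n - telescopingWeight p lam (prefixProd β) (n + 1) =
      (β n ^ (p - 1) - lam n / lam (n + 1)) / (lam n * prefixProd β (n + 1) ^ (p - 1)) := by
  have := Real.rpow_pos_of_pos (hβ n hn) (p - 1)
  have := Real.rpow_pos_of_pos (prefixProd_pos hβ n) (p - 1)
  simp only [telescopingWeight]
  rw [prefixProd_succ β hn, Real.mul_rpow (prefixProd_pos hβ n).le (hβ n hn).le]
  field_simp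

lemma rpow_sum_div_prefixProd_le {p c q Λ : ℝ} {lam : ℕ → ℝ} (hp : 1 ≤ p) (hc : 0 < c)
    (hlam : ∀ n, 1 ≤ n → 0 < lam n) (hΛ : 0 < Λ) (hq : 0 ≤ q) (hβ : ∀ i, 1 ≤ i → 0 < β i)
    (hn : 1 ≤ n) (hβn : β n ^ (p - 1) = c⁻¹ * q ^ (p - 1) * (lam n / Λ) + lam n / lam (n + 1))
    (hsum : ∑ k ∈ Finset.Icc 1 n, lam k * ∏ i ∈ Finset.Icc k n, β i ≤ c * (q * Λ)) :
    (∑ k ∈ Finset.Icc 1 n, lam k / prefixProd β k) ^ (p - 1) ≤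
      Λ ^ p * (c ^ p * (telescopingWeight p lam (prefixProd β) n -
        telescopingWeight p lam (prefixProd β) (n + 1))) := by
  have hlam_n := hlam n hn
  have hP := prefixProd_pos hβ (n + 1)
  have sum_nonneg : 0 ≤ ∑ k ∈ Finset.Icc 1 n, lam k / prefixProd β k :=
    Finset.sum_nonneg fun k hk ↦
      div_nonneg (hlam k (Finset.mem_Icc.1 hk).1).le (prefixProd_pos hβ k).le
  have sum_le : ∑ k ∈ Finset.Icc 1 n, lam k / prefixProd β k ≤
      c * (q * Λ) / prefixProd β (n + 1) := by
    rwa [le_div_iff₀' hP, ← sum_mul_prod_Icc_eq_prefixProd_mul_sum_div hβ]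
  refine (Real.rpow_le_rpow sum_nonneg sum_le (sub_nonneg.2 hp)).trans_eq ?_
  rw [telescopingWeight_prefixProd_sub hβ hn hlam_n.ne' (hlam (n + 1) (by lia)).ne', hβn,
    add_sub_cancel_right, Real.div_rpow (by positivity) hP.le, Real.mul_rpow hc.le (by positivity),
    Real.mul_rpow hq hΛ.le, Real.rpow_sub_one hc.ne', Real.rpow_sub_one hΛ.ne']
  have := Real.rpow_pos_of_pos hP (p - 1)
  field_simp

end PrefixProd

theorem stmt_16_general {p c : ℝ} (hp : 1 < p) (hc : 0 < c) {lam Lam q b A : ℕ → ℝ}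
    (hlam : ∀ n, 1 ≤ n → 0 < lam n) (hLam : ∀ n, 1 ≤ n → 0 < Lam n)
    (hq : ∀ n, 1 ≤ n → 0 ≤ q n)
    (hb : ∀ n, 1 ≤ n →
      b n = c⁻¹ * q n ^ (p - 1) * (lam n / Lam n) + lam n / lam (n + 1))
    (hmain : ∀ n, 1 ≤ n →
      ∑ k ∈ Finset.Icc 1 n, lam k * ∏ i ∈ Finset.Icc k n, b i ^ (1 / (p - 1)) ≤
        c * (q n * Lam n))
    (hA : ∀ n, 1 ≤ n → 0 ≤ A n) :
    ∑' n, ENNReal.ofReal (factorableTransform lam Lam A (n + 1)) ^ p ≤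
      ENNReal.ofReal (c ^ p) * ∑' n, ENNReal.ofReal (A (n + 1)) ^ p := by
  have hp1 : p - 1 ≠ 0 := (sub_pos.2 hp).ne'
  have b_pos (n : ℕ) (hn : 1 ≤ n) : 0 < b n := by
    have := hlam n hn
    have := hlam (n + 1) (by lia)
    have := hLam n hn
    have := hq n hn
    rw [hb n hn]
    positivity
  have β_pos (n : ℕ) (hn : 1 ≤ n) : 0 < b n ^ (1 / (p - 1)) := Real.rpow_pos_of_pos (b_pos n hn) _
  have β_rpow (n : ℕ) (hn : 1 ≤ n) : (b n ^ (1 / (p - 1))) ^ (p - 1) = b n := by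
    rw [one_div, Real.rpow_inv_rpow (b_pos n hn).le hp1]
  exact tsum_factorableTransform_rpow_le hp.le (by positivity) hlam hLam
    (fun n _ ↦ prefixProd_pos β_pos n) hA fun n hn ↦
      rpow_sum_div_prefixProd_le hp.le hc hlam (hLam n hn) (hq n hn) β_pos hn
        ((β_rpow n hn).trans (hb n hn)) (hmain n hn)

/-- Theorem 5.1: bound on the `l^p` norm of a factorable matrix. -/
theorem stmt_16 (p L a : ℝ) (hp : 1 < p) (hL0 : 0 < L) (hLp : L < p)
    (lam Lam : ℕ → ℝ)
    (hlam : ∀ n, 1 ≤ n → 0 < lam n) (hLam : ∀ n, 1 ≤ n → 0 < Lam n)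
    (hpos : ∀ n, 1 ≤ n → 0 < Lam n + a * lam n)
    (b : ℕ → ℝ)
    (hb : ∀ n, 1 ≤ n → b n = (p - L) / p * (1 + a * lam n / Lam n) ^ (p - 1) *
      (lam n / Lam n) + lam n / lam (n + 1))
    (hmain : ∀ n, 1 ≤ n →
      ∑ k ∈ Finset.Icc 1 n, lam k * ∏ i ∈ Finset.Icc k n, b i ^ (1 / (p - 1)) ≤
        p / (p - L) * (Lam n + a * lam n))
    (A : ℕ → ℝ) (hA : ∀ n, 1 ≤ n → 0 ≤ A n) :
    ∑' n : ℕ, ENNReal.ofReal (∑ k ∈ Finset.Icc 1 (n + 1), lam k / Lam (n + 1) * A k) ^ p ≤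
      ENNReal.ofReal ((p / (p - L)) ^ p) * ∑' n : ℕ, ENNReal.ofReal (A (n + 1)) ^ p := by
  have q_mul_Lam (n : ℕ) (hn : 1 ≤ n) :
      (1 + a * lam n / Lam n) * Lam n = Lam n + a * lam n := by
    rw [one_add_mul, div_mul_cancel₀ _ (hLam n hn).ne']
  exact stmt_16_general (q := fun n ↦ 1 + a * lam n / Lam n) hp
    (div_pos (by linarith) (sub_pos.2 hLp)) hlam hLam
    (fun n hn ↦ (pos_of_mul_pos_left (q_mul_Lam n hn ▸ hpos n hn) (hLam n hn).le).le)
    (fun n hn ↦ by rw [inv_div]; exact hb n hn)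
    (fun n hn ↦ (q_mul_Lam n hn).symm ▸ hmain n hn) hA
end

section
/- Let 1 < p < ∞, let (λ_n)_{n≥1} and (Λ_n)_{n≥1} be sequences of positive reals, let a be a real constant such that Λ_n + a·λ_n > 0 for all n ≥ 1, and let 0 < L < p. Suppose that for every n ≥ 1 (with the conventions Λ_0 = λ_0 = 0): ((p−L)/p)·(1 + a·λ_n/Λ_n)^{p−1} + Λ_n/λ_{n+1} ≤ (Λ_n/λ_n)·(1 + a·λ_n/Λ_n)^{p−1}·( (1 − L/p)·λ_n/Λ_n + Λ_{n−1}/Λ_n + a·λ_{n−1}/Λ_n )^{1−p}. Then for every nonnegative real sequence (a_n)_{n≥1}, ∑_{n=1}^∞ ( ∑_{k=1}^n (λ_k/Λ_n)·a_k )^p ≤ (p/(p−L))^p · ∑_{n=1}^∞ a_n^p. -/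
open scoped ENNReal

/-!
Put `c = (p - L) / p`, `w n = Lam n + a * lam n` and `S n = ∑ k ≤ n, lam k * A k`. After clearing
denominators the hypothesis reads
`c / Lam n ^ p + w n ^ (1 - p) / lam (n + 1) ≤ (w (n - 1) + c * lam n) ^ (1 - p) / lam n`.
Multiply by `S n ^ p = (S (n - 1) + lam n * A n) ^ p` and split the right-hand side by Radon's
inequality: the potential `E n = S n ^ p * w n ^ (1 - p) / lam (n + 1)` then satisfies
`c * (S n / Lam n) ^ p + E n ≤ E (n - 1) + c ^ (1 - p) * A n ^ p`, which telescopes from `E 0 = 0`.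
-/

theorem add_rpow_mul_add_rpow_one_sub_le {p s t u v : ℝ} (hp : 1 < p) (hs : 0 ≤ s) (ht : 0 ≤ t)
    (hu : 0 ≤ u) (hv : 0 < v) (hus : u = 0 → s = 0) :
    (s + t) ^ p * (u + v) ^ (1 - p) ≤ s ^ p * u ^ (1 - p) + t ^ p * v ^ (1 - p) := by
  rcases hu.eq_or_lt' with rfl | hu
  · simp [hus rfl, Real.zero_rpow (by linarith : p ≠ 0)]
  have perspective {x y : ℝ} (hx : 0 ≤ x) (hy : 0 < y) :
      x ^ p * y ^ (1 - p) = y * (x / y) ^ p := by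
    rw [Real.div_rpow hx hy.le, Real.rpow_sub hy, Real.rpow_one]
    ring
  have jensen : ((s + t) / (u + v)) ^ p ≤
      u / (u + v) * (s / u) ^ p + v / (u + v) * (t / v) ^ p := by
    have average : u / (u + v) * (s / u) + v / (u + v) * (t / v) = (s + t) / (u + v) := by
      field_simp
    rw [← average]
    exact (convexOn_rpow hp.le).2 (div_nonneg hs hu.le) (div_nonneg ht hv.le)
      (by positivity) (by positivity) (by field_simp)
  rw [perspective (add_nonneg hs ht) (add_pos hu hv), perspective hs hu, perspective ht hv]
  calc (u + v) * ((s + t) / (u + v)) ^ p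
      ≤ (u + v) * (u / (u + v) * (s / u) ^ p + v / (u + v) * (t / v) ^ p) := by gcongr
    _ = u * (s / u) ^ p + v * (t / v) ^ p := by field_simp

theorem tsum_ofReal_rpow_le_of_sum_range_le {f g : ℕ → ℝ} {p C : ℝ} (hp : 0 ≤ p) (hC : 0 ≤ C)
    (hf : ∀ n, 0 ≤ f n) (hg : ∀ n, 0 ≤ g n)
    (h : ∀ N, ∑ n ∈ Finset.range N, f n ^ p ≤ C * ∑ n ∈ Finset.range N, g n ^ p) :
    ∑' n, ENNReal.ofReal (f n) ^ p ≤ ENNReal.ofReal C * ∑' n, ENNReal.ofReal (g n) ^ p := by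
  have ofReal_sum {u : ℕ → ℝ} (hu : ∀ n, 0 ≤ u n) (N : ℕ) :
      ∑ n ∈ Finset.range N, ENNReal.ofReal (u n) ^ p =
        ENNReal.ofReal (∑ n ∈ Finset.range N, u n ^ p) := by
    simp only [ENNReal.ofReal_sum_of_nonneg fun n _ => Real.rpow_nonneg (hu n) p,
      ENNReal.ofReal_rpow_of_nonneg (hu _) hp]
  refine ENNReal.tsum_le_of_sum_range_le fun N => ?_
  calc ∑ n ∈ Finset.range N, ENNReal.ofReal (f n) ^ p
      ≤ ENNReal.ofReal (C * ∑ n ∈ Finset.range N, g n ^ p) := by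
        rw [ofReal_sum hf]
        exact ENNReal.ofReal_le_ofReal (h N)
    _ = ENNReal.ofReal C * ∑ n ∈ Finset.range N, ENNReal.ofReal (g n) ^ p := by
        rw [ENNReal.ofReal_mul hC, ofReal_sum hg]
    _ ≤ ENNReal.ofReal C * ∑' n, ENNReal.ofReal (g n) ^ p := by
        gcongr
        exact ENNReal.sum_le_tsum _

theorem div_rpow_add_le_iff {p c l l' M v W : ℝ} (hM : 0 < M) (hv : 0 < v) (hW : 0 ≤ W) :
    c * (v / M) ^ (p - 1) + M / l' ≤ M / l * (v / M) ^ (p - 1) * (W / M) ^ (1 - p) ↔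
      c / M ^ p + v ^ (1 - p) / l' ≤ W ^ (1 - p) / l := by
  have v_cancel : v ^ (p - 1) * v ^ (1 - p) = 1 := by
    rw [← Real.rpow_add hv, sub_add_sub_cancel', sub_self, Real.rpow_zero]
  have M_cancel : M ^ (p - 1) * M ^ (1 - p) = 1 := by
    rw [← Real.rpow_add hM, sub_add_sub_cancel', sub_self, Real.rpow_zero]
  have M_rpow : M ^ p = M ^ (p - 1) * M := by
    rw [Real.rpow_sub_one hM.ne', div_mul_cancel₀ _ hM.ne']
  have lhs : c * (v / M) ^ (p - 1) + M / l' =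
      v ^ (p - 1) * M * (c / M ^ p + v ^ (1 - p) / l') := by
    calc c * (v / M) ^ (p - 1) + M / l'
        = c * v ^ (p - 1) * M / M ^ p + v ^ (p - 1) * v ^ (1 - p) * (M / l') := by
          rw [v_cancel, Real.div_rpow hv.le hM.le, M_rpow]
          field_simp
      _ = v ^ (p - 1) * M * (c / M ^ p + v ^ (1 - p) / l') := by ring
  have rhs : M / l * (v / M) ^ (p - 1) * (W / M) ^ (1 - p) =
      v ^ (p - 1) * M * (W ^ (1 - p) / l) := by
    rw [Real.div_rpow hv.le hM.le, Real.div_rpow hW hM.le]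
    calc M / l * (v ^ (p - 1) / M ^ (p - 1)) * (W ^ (1 - p) / M ^ (1 - p))
        = v ^ (p - 1) * M * (W ^ (1 - p) / l) / (M ^ (p - 1) * M ^ (1 - p)) := by ring
      _ = v ^ (p - 1) * M * (W ^ (1 - p) / l) := by rw [M_cancel, div_one]
  rw [lhs, rhs, mul_le_mul_iff_of_pos_left (by positivity)]

theorem one_add_rpow_add_le_iff {p c a l₀ l l' M₀ M : ℝ} (hM : 0 < M) (hpos : 0 < M + a * l)
    (hbase : 0 ≤ c * l / M + M₀ / M + a * l₀ / M) :
    c * (1 + a * l / M) ^ (p - 1) + M / l' ≤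
        M / l * (1 + a * l / M) ^ (p - 1) * (c * l / M + M₀ / M + a * l₀ / M) ^ (1 - p) ↔
      c / M ^ p + (M + a * l) ^ (1 - p) / l' ≤ (M₀ + a * l₀ + c * l) ^ (1 - p) / l := by
  have base_eq : c * l / M + M₀ / M + a * l₀ / M = (M₀ + a * l₀ + c * l) / M := by ring
  rw [base_eq] at hbase ⊢
  rw [← div_rpow_add_le_iff hM hpos (by simpa using (le_div_iff₀ hM).1 hbase),
    add_div M, div_self (ne_of_gt hM)]

/-- The partial sum `∑_{k=1}^n lam k * A k`, the numerator of the `n`-th weighted mean of `A`.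
As in the theorem, indices start at `1`, so the value at `n = 0` is the empty sum. -/
def weightedSum (lam A : ℕ → ℝ) (n : ℕ) : ℝ :=
  ∑ k ∈ Finset.Icc 1 n, lam k * A k

/-- The potential whose decrease pays for the `n`-th weighted mean in the telescoping argument.
Where `w 0 = 0`, the junk value of `0 ^ (1 - p)` is harmless: it is multiplied by `0 ^ p = 0`. -/
noncomputable def potential (p : ℝ) (lam w A : ℕ → ℝ) (n : ℕ) : ℝ :=
  weightedSum lam A n ^ p * w n ^ (1 - p) / lam (n + 1)

section WeightedMeans

variable {p c : ℝ} {lam Lam w A : ℕ → ℝ}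

@[simp]
theorem weightedSum_zero : weightedSum lam A 0 = 0 := by
  simp [weightedSum]

theorem weightedSum_succ (n : ℕ) :
    weightedSum lam A (n + 1) = weightedSum lam A n + lam (n + 1) * A (n + 1) :=
  Finset.sum_Icc_succ_top (by omega) _

theorem weightedSum_nonneg (hlam : ∀ n, 1 ≤ n → 0 < lam n) (hA : ∀ n, 1 ≤ n → 0 ≤ A n) (n : ℕ) :
    0 ≤ weightedSum lam A n :=
  Finset.sum_nonneg fun k hk =>
    have one_le := (Finset.mem_Icc.1 hk).1
    mul_nonneg (hlam k one_le).le (hA k one_le)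

theorem sum_div_mul_eq_weightedSum_div (M : ℝ) (n : ℕ) :
    ∑ k ∈ Finset.Icc 1 n, lam k / M * A k = weightedSum lam A n / M := by
  simp only [weightedSum, Finset.sum_div, div_mul_eq_mul_div]

theorem potential_zero (hp : p ≠ 0) : potential p lam w A 0 = 0 := by
  simp [potential, Real.zero_rpow hp]

theorem potential_nonneg (hlam : ∀ n, 1 ≤ n → 0 < lam n) (hA : ∀ n, 1 ≤ n → 0 ≤ A n)
    {n : ℕ} (hw : 0 ≤ w n) : 0 ≤ potential p lam w A n := by
  have := weightedSum_nonneg hlam hA n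
  have := hlam (n + 1) (by omega)
  unfold potential
  positivity

theorem mul_div_rpow_add_le_of_weight_le {S x l l' M u v : ℝ} (hp : 1 < p) (hc : 0 < c)
    (hl : 0 < l) (hM : 0 ≤ M) (hS : 0 ≤ S) (hx : 0 ≤ x) (hu : 0 ≤ u) (huS : u = 0 → S = 0)
    (h : c / M ^ p + v ^ (1 - p) / l' ≤ (u + c * l) ^ (1 - p) / l) :
    c * ((S + l * x) / M) ^ p + (S + l * x) ^ p * v ^ (1 - p) / l' ≤
      S ^ p * u ^ (1 - p) / l + c ^ (1 - p) * x ^ p := by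
  have hT : 0 ≤ S + l * x := by positivity
  have new_term : (l * x) ^ p * (c * l) ^ (1 - p) / l = c ^ (1 - p) * x ^ p := by
    rw [Real.mul_rpow hl.le hx, Real.mul_rpow hc.le hl.le, Real.rpow_sub hl, Real.rpow_one]
    field_simp
  calc c * ((S + l * x) / M) ^ p + (S + l * x) ^ p * v ^ (1 - p) / l'
      = (S + l * x) ^ p * (c / M ^ p + v ^ (1 - p) / l') := by
        rw [Real.div_rpow hT hM]
        ring
    _ ≤ (S + l * x) ^ p * ((u + c * l) ^ (1 - p) / l) := by gcongr
    _ = (S + l * x) ^ p * (u + c * l) ^ (1 - p) / l := by ring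
    _ ≤ (S ^ p * u ^ (1 - p) + (l * x) ^ p * (c * l) ^ (1 - p)) / l := by
        gcongr
        exact add_rpow_mul_add_rpow_one_sub_le hp hS (by positivity) hu (by positivity) huS
    _ = S ^ p * u ^ (1 - p) / l + c ^ (1 - p) * x ^ p := by rw [add_div, new_term]

theorem weight_nonneg (hw0 : 0 ≤ w 0) (hw : ∀ n, 1 ≤ n → 0 < w n) (n : ℕ) : 0 ≤ w n :=
  n.eq_zero_or_pos.elim (fun h => h ▸ hw0) fun h => (hw n h).le

theorem mul_mean_rpow_add_potential_succ_le (hp : 1 < p) (hc : 0 < c)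
    (hlam : ∀ n, 1 ≤ n → 0 < lam n) (hLam : ∀ n, 1 ≤ n → 0 < Lam n)
    (hw0 : 0 ≤ w 0) (hw : ∀ n, 1 ≤ n → 0 < w n) (hA : ∀ n, 1 ≤ n → 0 ≤ A n) {n : ℕ}
    (h : c / Lam (n + 1) ^ p + w (n + 1) ^ (1 - p) / lam (n + 2) ≤
      (w n + c * lam (n + 1)) ^ (1 - p) / lam (n + 1)) :
    c * (weightedSum lam A (n + 1) / Lam (n + 1)) ^ p + potential p lam w A (n + 1) ≤
      potential p lam w A n + c ^ (1 - p) * A (n + 1) ^ p := by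
  have sum_eq_zero_of_weight_eq_zero : w n = 0 → weightedSum lam A n = 0 := by
    rcases n.eq_zero_or_pos with rfl | hn
    · exact fun _ => weightedSum_zero
    · exact fun hwn => absurd hwn (hw n hn).ne'
  simp only [potential, weightedSum_succ n]
  exact mul_div_rpow_add_le_of_weight_le hp hc (hlam _ (by omega)) (hLam _ (by omega)).le
    (weightedSum_nonneg hlam hA n) (hA _ (by omega)) (weight_nonneg hw0 hw n)
    sum_eq_zero_of_weight_eq_zero h

theorem sum_mean_rpow_le (hp : 1 < p) (hc : 0 < c)
    (hlam : ∀ n, 1 ≤ n → 0 < lam n) (hLam : ∀ n, 1 ≤ n → 0 < Lam n)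
    (hw0 : 0 ≤ w 0) (hw : ∀ n, 1 ≤ n → 0 < w n) (hA : ∀ n, 1 ≤ n → 0 ≤ A n)
    (h : ∀ n, c / Lam (n + 1) ^ p + w (n + 1) ^ (1 - p) / lam (n + 2) ≤
      (w n + c * lam (n + 1)) ^ (1 - p) / lam (n + 1)) (N : ℕ) :
    ∑ n ∈ Finset.range N, (weightedSum lam A (n + 1) / Lam (n + 1)) ^ p ≤
      c⁻¹ ^ p * ∑ n ∈ Finset.range N, A (n + 1) ^ p := by
  have telescoped : c * ∑ n ∈ Finset.range N, (weightedSum lam A (n + 1) / Lam (n + 1)) ^ p +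
      potential p lam w A N ≤ c ^ (1 - p) * ∑ n ∈ Finset.range N, A (n + 1) ^ p := by
    induction N with
    | zero => simp [potential_zero (by linarith : p ≠ 0)]
    | succ N ih =>
      rw [Finset.sum_range_succ, Finset.sum_range_succ, mul_add, mul_add]
      linarith [mul_mean_rpow_add_potential_succ_le hp hc hlam hLam hw0 hw hA (h N)]
  have potential_N_nonneg : 0 ≤ potential p lam w A N :=
    potential_nonneg hlam hA (weight_nonneg hw0 hw N)
  have const_eq : c * c⁻¹ ^ p = c ^ (1 - p) := by
    rw [Real.inv_rpow hc.le, Real.rpow_sub hc, Real.rpow_one, div_eq_mul_inv]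
  refine le_of_mul_le_mul_left ?_ hc
  rw [← mul_assoc, const_eq]
  linarith

end WeightedMeans

theorem stmt_17_general {p c : ℝ} (hp : 1 < p) (hc : 0 < c) {lam Lam w A : ℕ → ℝ}
    (hlam : ∀ n, 1 ≤ n → 0 < lam n) (hLam : ∀ n, 1 ≤ n → 0 < Lam n)
    (hw0 : 0 ≤ w 0) (hw : ∀ n, 1 ≤ n → 0 < w n) (hA : ∀ n, 1 ≤ n → 0 ≤ A n)
    (h : ∀ n, c / Lam (n + 1) ^ p + w (n + 1) ^ (1 - p) / lam (n + 2) ≤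
      (w n + c * lam (n + 1)) ^ (1 - p) / lam (n + 1)) :
    ∑' n : ℕ, ENNReal.ofReal (∑ k ∈ Finset.Icc 1 (n + 1), lam k / Lam (n + 1) * A k) ^ p ≤
      ENNReal.ofReal (c⁻¹ ^ p) * ∑' n : ℕ, ENNReal.ofReal (A (n + 1)) ^ p := by
  simp only [sum_div_mul_eq_weightedSum_div]
  exact tsum_ofReal_rpow_le_of_sum_range_le (by linarith) (by positivity)
    (fun n => div_nonneg (weightedSum_nonneg hlam hA _) (hLam _ (by omega)).le)
    (fun n => hA _ (by omega)) (sum_mean_rpow_le hp hc hlam hLam hw0 hw hA h)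

/-- Corollary 5.1: bound on the `l^p` norm of a factorable matrix. -/
theorem stmt_17 (p L a : ℝ) (hp : 1 < p) (hL0 : 0 < L) (hLp : L < p)
    (lam Lam : ℕ → ℝ)
    (hlam : ∀ n, 1 ≤ n → 0 < lam n) (hLam : ∀ n, 1 ≤ n → 0 < Lam n)
    (hlam0 : lam 0 = 0) (hLam0 : Lam 0 = 0)
    (hpos : ∀ n, 1 ≤ n → 0 < Lam n + a * lam n)
    (hbasepos : ∀ n, 1 ≤ n →
      0 < (1 - L / p) * lam n / Lam n + Lam (n - 1) / Lam n + a * lam (n - 1) / Lam n)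
    (hmain : ∀ n, 1 ≤ n →
      (p - L) / p * (1 + a * lam n / Lam n) ^ (p - 1) + Lam n / lam (n + 1) ≤
        Lam n / lam n * (1 + a * lam n / Lam n) ^ (p - 1) *
          ((1 - L / p) * lam n / Lam n + Lam (n - 1) / Lam n + a * lam (n - 1) / Lam n)
            ^ (1 - p))
    (A : ℕ → ℝ) (hA : ∀ n, 1 ≤ n → 0 ≤ A n) :
    ∑' n : ℕ, ENNReal.ofReal (∑ k ∈ Finset.Icc 1 (n + 1), lam k / Lam (n + 1) * A k) ^ p ≤
      ENNReal.ofReal ((p / (p - L)) ^ p) * ∑' n : ℕ, ENNReal.ofReal (A (n + 1)) ^ p := by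
  have c_eq : 1 - L / p = (p - L) / p := by rw [sub_div, div_self (by linarith)]
  simp only [c_eq] at hbasepos hmain
  rw [← inv_div (p - L) p]
  exact stmt_17_general (w := fun n => Lam n + a * lam n) hp
    (div_pos (sub_pos.2 hLp) (by linarith)) hlam hLam (by simp [hlam0, hLam0]) hpos hA fun n =>
      (one_add_rpow_add_le_iff (hLam _ n.succ_pos) (hpos _ n.succ_pos)
        (hbasepos _ n.succ_pos).le).1 (hmain _ n.succ_pos)
end
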